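/- Suppose P_1 and P_2 are symmetric positive semidefinite n×n matrices, both solving the stochastic algebraic Riccati equation, and suppose their associated gains L(P_1) = −(R + Bᵀ P_1 B + Σ_{j=1}^q β̄_j B_jᵀ P_1 B_j)^{-1} Bᵀ P_1 A and L(P_2) (defined analogously) are both admissible. Then P_1 = P_2; i.e., the SARE has at most one positive semidefinite solution with admissible associated gain. -/

import Mathlib

open Matrix Filter Topology

/-- The sandwich map `X ↦ M * X * Mᵀ` as a linear endomorphism of `n × n` real matrices. -/
noncomputable def sandwich {n : ℕ} (M : Matrix (Fin n) (Fin n) ℝ) :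
    Module.End ℝ (Matrix (Fin n) (Fin n) ℝ) :=
  (LinearMap.mulLeft ℝ M).comp (LinearMap.mulRight ℝ Mᵀ)

/-- The closed-loop covariance operator
`𝒯_L(X) = (A+BL) X (A+BL)ᵀ + Σᵢ ᾱᵢ Aᵢ X Aᵢᵀ + Σⱼ β̄ⱼ (BⱼL) X (BⱼL)ᵀ`. -/
noncomputable def calT {n m p q : ℕ}
    (A : Matrix (Fin n) (Fin n) ℝ) (A' : Fin p → Matrix (Fin n) (Fin n) ℝ)
    (B : Matrix (Fin n) (Fin m) ℝ) (B' : Fin q → Matrix (Fin n) (Fin m) ℝ)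
    (al : Fin p → ℝ) (be : Fin q → ℝ) (L : Matrix (Fin m) (Fin n) ℝ) :
    Module.End ℝ (Matrix (Fin n) (Fin n) ℝ) :=
  sandwich (A + B * L) + ∑ i, al i • sandwich (A' i) + ∑ j, be j • sandwich (B' j * L)

/-- The (trace-)adjoint operator
`𝒯_L^*(P) = (A+BL)ᵀ P (A+BL) + Σᵢ ᾱᵢ Aᵢᵀ P Aᵢ + Σⱼ β̄ⱼ Lᵀ Bⱼᵀ P Bⱼ L`. -/
noncomputable def calTstar {n m p q : ℕ}
    (A : Matrix (Fin n) (Fin n) ℝ) (A' : Fin p → Matrix (Fin n) (Fin n) ℝ)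
    (B : Matrix (Fin n) (Fin m) ℝ) (B' : Fin q → Matrix (Fin n) (Fin m) ℝ)
    (al : Fin p → ℝ) (be : Fin q → ℝ) (L : Matrix (Fin m) (Fin n) ℝ) :
    Module.End ℝ (Matrix (Fin n) (Fin n) ℝ) :=
  sandwich (A + B * L)ᵀ + ∑ i, al i • sandwich (A' i)ᵀ + ∑ j, be j • sandwich (B' j * L)ᵀ

/-- A gain `L` is admissible if the spectral radius of `𝒯_L`, as a linear endomorphism of
the space of `n × n` real matrices, is strictly less than `1`. -/
noncomputable def Admissible {n m p q : ℕ}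
    (A : Matrix (Fin n) (Fin n) ℝ) (A' : Fin p → Matrix (Fin n) (Fin n) ℝ)
    (B : Matrix (Fin n) (Fin m) ℝ) (B' : Fin q → Matrix (Fin n) (Fin m) ℝ)
    (al : Fin p → ℝ) (be : Fin q → ℝ) (L : Matrix (Fin m) (Fin n) ℝ) : Prop :=
  spectralRadius ℝ (calT A A' B B' al be L) < 1

/-- In a Banach algebra, a closed multiplicative cone is stable under the Neumann series. -/
theorem aux_neumann {𝒜 : Type*} [NormedRing 𝒜] [CompleteSpace 𝒜]
    (C : Subsemiring 𝒜) (hC : IsClosed (C : Set 𝒜)) (a : 𝒜) (ha : a ∈ C) (h : ‖a‖ < 1) :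
    Ring.inverse (1 - a) ∈ C := by
  have h1 := hasSum_geom_series_inverse a h
  exact hC.mem_of_tendsto h1 (Filter.Eventually.of_forall fun s =>
    C.sum_mem fun i _ => C.pow_mem ha i)

theorem aux_resolvent {𝒜 : Type*} [NormedRing 𝒜] [NormedAlgebra ℝ 𝒜] [CompleteSpace 𝒜]
    (C : Subsemiring 𝒜) (hC : IsClosed (C : Set 𝒜))
    (hs : ∀ c : ℝ, 0 ≤ c → ∀ a ∈ C, c • a ∈ C) (T : 𝒜) (hT : T ∈ C)
    (hU : ∀ t ∈ Set.Icc (0:ℝ) 1, IsUnit (1 - t • T)) :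
    Ring.inverse (1 - T) ∈ C := by
  have key : Set.Icc (0:ℝ) 1 ⊆ {t : ℝ | Ring.inverse (1 - t • T) ∈ C} := by
    apply IsClosed.Icc_subset_of_forall_exists_gt
    · rw [Set.inter_comm]
      have hcont : ContinuousOn (fun t : ℝ => Ring.inverse (1 - t • T)) (Set.Icc 0 1) := by
        intro t ht
        obtain ⟨u, hu⟩ := hU t ht
        have h1 : ContinuousAt Ring.inverse (1 - t • T) := by
          rw [← hu]; exact NormedRing.inverse_continuousAt u
        have h2 : ContinuousAt (fun t : ℝ => 1 - t • T) t := by fun_prop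
        exact (ContinuousAt.comp (f := fun t : ℝ => 1 - t • T) h1 h2).continuousWithinAt
      exact hcont.preimage_isClosed_of_isClosed isClosed_Icc hC
    · simp [C.one_mem]
    · rintro t ⟨htC, ht⟩ y hy
      simp only [Set.mem_ofPred_eq] at htC
      set F := Ring.inverse (1 - t • T) with hF
      have hFT : F * T ∈ C := C.mul_mem htC hT
      obtain ⟨u, hu⟩ := hU t ⟨ht.1, ht.2.le⟩
      have hpos : 0 < ‖F * T‖ + 1 := by positivity
      set e := min (y - t) (1 / (‖F * T‖ + 1)) with he
      have he0 : 0 < e := lt_min (sub_pos.2 hy) (by positivity)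
      have hlt : ‖e • (F * T)‖ < 1 := by
        rw [norm_smul, Real.norm_of_nonneg he0.le]
        calc e * ‖F * T‖ < e * (‖F * T‖ + 1) := by nlinarith
          _ ≤ 1 / (‖F * T‖ + 1) * (‖F * T‖ + 1) := by gcongr; exact min_le_right _ _
          _ = 1 := by field_simp
      refine ⟨t + e, ?_, by simpa using he0, ?_⟩
      · have hN := aux_neumann C hC _ (hs e he0.le _ hFT) hlt
        have hFu : F = ↑u⁻¹ := by rw [hF, ← hu, Ring.inverse_unit]
        have hfac : 1 - (t + e) • T = ((u * Units.oneSub _ hlt : 𝒜ˣ) : 𝒜) := by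
          rw [Units.val_mul, Units.val_oneSub, mul_sub, mul_smul_comm, ← mul_assoc, hFu,
            Units.mul_inv, hu, add_smul, one_mul, mul_one, sub_sub]
        simp only [Set.mem_ofPred_eq]
        rw [hfac, Ring.inverse_unit, _root_.mul_inv_rev, Units.val_mul, ← NormedRing.inverse_one_sub,
          ← hFu]
        exact C.mul_mem hN htC
      · have := min_le_left (y - t) (1 / (‖F * T‖ + 1))
        linarith
  have := key (Set.right_mem_Icc.2 zero_le_one)
  simpa using this

theorem aux_cone {E : Type*} [NormedAddCommGroup E] [NormedSpace ℝ E] [FiniteDimensional ℝ E]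
    (K : Set E) (hK : IsClosed K) (h0 : (0:E) ∈ K) (hadd : ∀ x ∈ K, ∀ y ∈ K, x + y ∈ K)
    (hsm : ∀ c : ℝ, 0 ≤ c → ∀ x ∈ K, c • x ∈ K) (T : Module.End ℝ E)
    (hT : ∀ x ∈ K, T x ∈ K) (hr : spectralRadius ℝ T < 1) (x : E) (hx : x ∈ K) :
    ∃ y ∈ K, y - T y = x := by
  haveI : CompleteSpace E := FiniteDimensional.complete ℝ E
  let C : Subsemiring (E →L[ℝ] E) :=
    { carrier := {f | ∀ x ∈ K, f x ∈ K}
      mul_mem' := fun {f g} hf hg x hx => hf _ (hg x hx)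
      one_mem' := fun x hx => hx
      add_mem' := fun {f g} hf hg x hx => hadd _ (hf x hx) _ (hg x hx)
      zero_mem' := fun x hx => h0 }
  have hC : IsClosed (C : Set (E →L[ℝ] E)) := by
    have : (C : Set (E →L[ℝ] E)) = ⋂ x ∈ K, (fun f : E →L[ℝ] E => f x) ⁻¹' K := by
      ext f
      simp only [Set.mem_iInter, Set.mem_preimage]
      exact Iff.rfl
    rw [this]
    refine isClosed_biInter fun x _ => hK.preimage (by fun_prop)
  let T' := Module.End.toContinuousLinearMap E T
  have hTT : ∀ z, T' z = T z := fun z => rfl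
  have hU : ∀ t ∈ Set.Icc (0:ℝ) 1, IsUnit (1 - t • T') := by
    intro t ht
    rcases ht.1.eq_or_lt with h | h
    · simp [← h]
    · have h1 : t⁻¹ ∉ spectrum ℝ T := by
        intro hm
        have h2 : (‖t⁻¹‖₊ : ENNReal) ≤ spectralRadius ℝ T := le_iSup₂ (α := ENNReal) t⁻¹ hm
        have h3 := h2.trans_lt hr
        have h4 : ‖t⁻¹‖ < 1 := by exact_mod_cast h3
        rw [Real.norm_of_nonneg (by positivity)] at h4
        have := (one_le_inv₀ h).2 ht.2
        linarith
      have h1' : t⁻¹ ∉ spectrum ℝ T' := by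
        rwa [AlgEquiv.spectrum_eq (Module.End.toContinuousLinearMap E) T]
      rw [spectrum.notMem_iff] at h1'
      have h5 : (1 - t • T') = algebraMap ℝ (E →L[ℝ] E) t * (algebraMap ℝ (E →L[ℝ] E) t⁻¹ - T') := by
        rw [mul_sub, ← map_mul, mul_inv_cancel₀ h.ne', map_one, Algebra.smul_def]
      rw [h5]
      exact ((IsUnit.mk0 t h.ne').map _).mul h1'
  have hmem := aux_resolvent C hC (fun c hc f hf x hx => hsm c hc _ (hf x hx)) T' hT hU
  refine ⟨Ring.inverse (1 - T') x, hmem x hx, ?_⟩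
  have hu : IsUnit (1 - T') := by simpa using hU 1 (by simp)
  have := congrArg (fun f : E →L[ℝ] E => f x) (Ring.mul_inverse_cancel _ hu)
  simpa [hTT] using this

theorem aux_closed {n : ℕ} : IsClosed {X : Matrix (Fin n) (Fin n) ℝ | X.PosSemidef} := by
  simp only [Matrix.posSemidef_iff_dotProduct_mulVec, Set.ofPred_and, Set.ofPred_forall]
  refine IsClosed.inter ?_ (isClosed_iInter fun x => ?_)
  · exact isClosed_eq (by fun_prop) continuous_id
  · exact isClosed_le continuous_const (by fun_prop)

theorem aux_sandwich {n : ℕ} (M X : Matrix (Fin n) (Fin n) ℝ) : sandwich M X = M * X * Mᵀ := by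
  simp [sandwich, mul_assoc]

open scoped MatrixOrder Matrix.Norms.L2Operator in
theorem aux_trace {n : ℕ} (M Y : Matrix (Fin n) (Fin n) ℝ) (hM : M.PosSemidef)
    (hY : Y.PosSemidef) : 0 ≤ (M * Y).trace := by
  obtain ⟨Z, rfl⟩ := CStarAlgebra.nonneg_iff_eq_star_mul_self.1 hY.nonneg
  rw [← mul_assoc, Matrix.trace_mul_comm, ← mul_assoc]
  exact (hM.mul_mul_conjTranspose_same Z).trace_nonneg

section
variable {n m p q : ℕ}
    (A : Matrix (Fin n) (Fin n) ℝ) (A' : Fin p → Matrix (Fin n) (Fin n) ℝ)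
    (B : Matrix (Fin n) (Fin m) ℝ) (B' : Fin q → Matrix (Fin n) (Fin m) ℝ)
    (al : Fin p → ℝ) (be : Fin q → ℝ)

theorem aux_pos (hal : ∀ i, 0 ≤ al i) (hbe : ∀ j, 0 ≤ be j) (L : Matrix (Fin m) (Fin n) ℝ)
    (X : Matrix (Fin n) (Fin n) ℝ) (hX : X.PosSemidef) :
    (calT A A' B B' al be L X).PosSemidef := by
  have hs : ∀ M : Matrix (Fin n) (Fin n) ℝ, (sandwich M X).PosSemidef := fun M => by
    rw [aux_sandwich]; exact hX.mul_mul_conjTranspose_same M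
  simp only [calT, LinearMap.add_apply, LinearMap.sum_apply, LinearMap.smul_apply]
  exact ((hs _).add (Matrix.posSemidef_sum _ fun i _ => (hs _).smul (hal i))).add
    (Matrix.posSemidef_sum _ fun i _ => (hs _).smul (hbe i))

theorem aux_adj (L : Matrix (Fin m) (Fin n) ℝ) (D Y : Matrix (Fin n) (Fin n) ℝ) :
    (D * calT A A' B B' al be L Y).trace = (calTstar A A' B B' al be L D * Y).trace := by
  have hs : ∀ M : Matrix (Fin n) (Fin n) ℝ,
      (D * sandwich M Y).trace = (sandwich Mᵀ D * Y).trace := fun M => by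
    rw [aux_sandwich, aux_sandwich, Matrix.transpose_transpose, ← mul_assoc,
      Matrix.trace_mul_comm]
    simp only [mul_assoc]
  simp only [calT, calTstar, LinearMap.add_apply, LinearMap.sum_apply, LinearMap.smul_apply,
    mul_add, add_mul, Finset.mul_sum, Finset.sum_mul, Matrix.trace_add, Matrix.trace_sum,
    Matrix.mul_smul, Matrix.smul_mul, Matrix.trace_smul, hs]

theorem aux_neg (hal : ∀ i, 0 ≤ al i) (hbe : ∀ j, 0 ≤ be j) (L : Matrix (Fin m) (Fin n) ℝ)
    (hadm : Admissible A A' B B' al be L) (D W : Matrix (Fin n) (Fin n) ℝ) (hW : W.PosSemidef)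
    (hD : calTstar A A' B B' al be L D = D + W) (v : Fin n → ℝ) : v ⬝ᵥ (D *ᵥ v) ≤ 0 := by
  letI := Matrix.normedAddCommGroup (m := Fin n) (n := Fin n) (α := ℝ)
  letI := Matrix.normedSpace (R := ℝ) (m := Fin n) (n := Fin n) (α := ℝ)
  have hv : (Matrix.vecMulVec v v).PosSemidef := by
    simpa using Matrix.posSemidef_vecMulVec_self_star v
  obtain ⟨Y, hY, hYe⟩ := aux_cone {X : Matrix (Fin n) (Fin n) ℝ | X.PosSemidef} aux_closed
    Matrix.PosSemidef.zero (fun x hx y hy => Matrix.PosSemidef.add hx hy)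
    (fun c hc x hx => Matrix.PosSemidef.smul hx hc) (calT A A' B B' al be L)
    (aux_pos A A' B B' al be hal hbe L) hadm _ hv
  have h1 : v ⬝ᵥ (D *ᵥ v) = (D * Matrix.vecMulVec v v).trace := by
    rw [Matrix.mul_vecMulVec, Matrix.trace_vecMulVec, dotProduct_comm]
  have h2 := aux_trace W Y hW hY
  rw [h1, ← hYe, mul_sub, Matrix.trace_sub, aux_adj, hD, add_mul, Matrix.trace_add]
  linarith

theorem aux_S (hbe : ∀ j, 0 ≤ be j) (R : Matrix (Fin m) (Fin m) ℝ) (hR : R.PosDef)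
    (P : Matrix (Fin n) (Fin n) ℝ) (hP : P.PosSemidef) :
    (R + Bᵀ * P * B + ∑ j, be j • ((B' j)ᵀ * P * B' j)).PosDef :=
  (hR.add_posSemidef (hP.conjTranspose_mul_mul_same B)).add_posSemidef
    (Matrix.posSemidef_sum _ fun j _ => (hP.conjTranspose_mul_mul_same (B' j)).smul (hbe j))

/-- Completion of squares. -/
theorem aux_square (hbe : ∀ j, 0 ≤ be j) (Q : Matrix (Fin n) (Fin n) ℝ)
    (R : Matrix (Fin m) (Fin m) ℝ) (hR : R.PosDef)
    (P : Matrix (Fin n) (Fin n) ℝ) (hP : P.PosSemidef)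
    (S : Matrix (Fin m) (Fin m) ℝ)
    (hS : S = R + Bᵀ * P * B + ∑ j, be j • ((B' j)ᵀ * P * B' j))
    (hSARE : P = Q + Aᵀ * P * A + (∑ i, al i • ((A' i)ᵀ * P * A' i)) -
      Aᵀ * P * B * S⁻¹ * (Bᵀ * P * A)) (L : Matrix (Fin m) (Fin n) ℝ) :
    calTstar A A' B B' al be L P + Q + Lᵀ * R * L =
      P + (L - -S⁻¹ * (Bᵀ * P * A))ᵀ * S * (L - -S⁻¹ * (Bᵀ * P * A)) := by
  have hSp : S.PosDef := hS ▸ aux_S B B' be hbe R hR P hP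
  have hdet : IsUnit S.det := (Matrix.isUnit_iff_isUnit_det _).1 hSp.isUnit
  have hSt : Sᵀ = S := hSp.isHermitian
  have hPt : Pᵀ = P := hP.isHermitian
  set G := Bᵀ * P * A with hG
  have hGt : Aᵀ * P * B = Gᵀ := by
    simp [hG, Matrix.transpose_mul, hPt, Matrix.mul_assoc]
  have hsq : (L - -S⁻¹ * G)ᵀ * S * (L - -S⁻¹ * G) =
      Lᵀ * S * L + Lᵀ * G + Gᵀ * L + Gᵀ * S⁻¹ * G := by
    have e1 : S * (L - -S⁻¹ * G) = S * L + G := by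
      rw [Matrix.neg_mul, sub_neg_eq_add, Matrix.mul_add, Matrix.mul_nonsing_inv_cancel_left _ _ hdet]
    have e2 : (L - -S⁻¹ * G)ᵀ = Lᵀ + Gᵀ * S⁻¹ := by
      rw [Matrix.neg_mul, sub_neg_eq_add, Matrix.transpose_add, Matrix.transpose_mul,
        Matrix.transpose_nonsing_inv, hSt]
    rw [Matrix.mul_assoc, e1, e2, Matrix.add_mul, Matrix.mul_add, Matrix.mul_add,
      ← Matrix.mul_assoc (Gᵀ * S⁻¹), Matrix.nonsing_inv_mul_cancel_right _ _ hdet,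
      ← Matrix.mul_assoc]
    abel
  have hT : calTstar A A' B B' al be L P = Aᵀ * P * A + Gᵀ * L + Lᵀ * G + Lᵀ * (Bᵀ * P * B) * L
      + (∑ i, al i • ((A' i)ᵀ * P * A' i)) + Lᵀ * (∑ j, be j • ((B' j)ᵀ * P * B' j)) * L := by
    simp only [calTstar, LinearMap.add_apply, LinearMap.sum_apply, LinearMap.smul_apply,
      aux_sandwich, Matrix.transpose_transpose, hPt, hG, Matrix.transpose_add,
      Matrix.transpose_mul, Matrix.add_mul, Matrix.mul_add, Matrix.mul_sum, Matrix.sum_mul,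
      Matrix.mul_smul, Matrix.smul_mul, Matrix.mul_assoc]
    abel
  rw [hsq, hT]
  rw [hGt] at hSARE
  have hLS : Lᵀ * S * L = Lᵀ * R * L + Lᵀ * (Bᵀ * P * B) * L +
      Lᵀ * (∑ j, be j • ((B' j)ᵀ * P * B' j)) * L := by
    rw [hS]; simp only [Matrix.mul_add, Matrix.add_mul]
  rw [hLS]
  have h3 : Q + Aᵀ * P * A + (∑ i, al i • ((A' i)ᵀ * P * A' i)) = P + Gᵀ * S⁻¹ * G :=
    eq_add_of_sub_eq hSARE.symm
  have h4 : P + (Lᵀ * R * L + Lᵀ * (Bᵀ * P * B) * L +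
      Lᵀ * (∑ j, be j • ((B' j)ᵀ * P * B' j)) * L + Lᵀ * G + Gᵀ * L + Gᵀ * S⁻¹ * G) =
      (P + Gᵀ * S⁻¹ * G) + (Lᵀ * R * L + Lᵀ * (Bᵀ * P * B) * L +
      Lᵀ * (∑ j, be j • ((B' j)ᵀ * P * B' j)) * L + Lᵀ * G + Gᵀ * L) := by abel
  rw [h4, ← h3]
  abel

theorem aux_main (hal : ∀ i, 0 ≤ al i) (hbe : ∀ j, 0 ≤ be j)
    (Q : Matrix (Fin n) (Fin n) ℝ)
    (R : Matrix (Fin m) (Fin m) ℝ) (hR : R.PosDef)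
    (P1 P2 : Matrix (Fin n) (Fin n) ℝ)
    (hP1 : P1.PosSemidef) (hP2 : P2.PosSemidef)
    (hSARE1 : P1 = Q + Aᵀ * P1 * A + (∑ i, al i • ((A' i)ᵀ * P1 * A' i)) -
      Aᵀ * P1 * B * (R + Bᵀ * P1 * B + ∑ j, be j • ((B' j)ᵀ * P1 * B' j))⁻¹ *
        (Bᵀ * P1 * A))
    (hSARE2 : P2 = Q + Aᵀ * P2 * A + (∑ i, al i • ((A' i)ᵀ * P2 * A' i)) -
      Aᵀ * P2 * B * (R + Bᵀ * P2 * B + ∑ j, be j • ((B' j)ᵀ * P2 * B' j))⁻¹ *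
        (Bᵀ * P2 * A))
    (hadm2 : Admissible A A' B B' al be
      (-(R + Bᵀ * P2 * B + ∑ j, be j • ((B' j)ᵀ * P2 * B' j))⁻¹ * (Bᵀ * P2 * A)))
    (v : Fin n → ℝ) : v ⬝ᵥ ((P1 - P2) *ᵥ v) ≤ 0 := by
  have hS1 := aux_S B B' be hbe R hR P1 hP1
  have s1 := aux_square A A' B B' al be hbe Q R hR P1 hP1 _ rfl hSARE1
    (-(R + Bᵀ * P2 * B + ∑ j, be j • ((B' j)ᵀ * P2 * B' j))⁻¹ * (Bᵀ * P2 * A))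
  have s2 := aux_square A A' B B' al be hbe Q R hR P2 hP2 _ rfl hSARE2
    (-(R + Bᵀ * P2 * B + ∑ j, be j • ((B' j)ᵀ * P2 * B' j))⁻¹ * (Bᵀ * P2 * A))
  refine aux_neg A A' B B' al be hal hbe _ hadm2 _ _
    (hS1.posSemidef.conjTranspose_mul_mul_same
      (-(R + Bᵀ * P2 * B + ∑ j, be j • ((B' j)ᵀ * P2 * B' j))⁻¹ * (Bᵀ * P2 * A) -
       -(R + Bᵀ * P1 * B + ∑ j, be j • ((B' j)ᵀ * P1 * B' j))⁻¹ * (Bᵀ * P1 * A))) ?_ v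
  rw [sub_self, Matrix.mul_zero, add_zero] at s2
  rw [map_sub, Matrix.conjTranspose_eq_transpose_of_trivial]
  have := congrArg₂ (· - ·) s1 s2
  simp only [add_sub_add_right_eq_sub] at this
  rw [this]
  abel

end

theorem stmt13 {n m p q : ℕ} (hn : 0 < n) (hm : 0 < m)
    (A : Matrix (Fin n) (Fin n) ℝ) (A' : Fin p → Matrix (Fin n) (Fin n) ℝ)
    (B : Matrix (Fin n) (Fin m) ℝ) (B' : Fin q → Matrix (Fin n) (Fin m) ℝ)
    (al : Fin p → ℝ) (be : Fin q → ℝ) (hal : ∀ i, 0 ≤ al i) (hbe : ∀ j, 0 ≤ be j)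
    (Q : Matrix (Fin n) (Fin n) ℝ) (hQ : Q.PosSemidef)
    (R : Matrix (Fin m) (Fin m) ℝ) (hR : R.PosDef)
    (P1 P2 : Matrix (Fin n) (Fin n) ℝ)
    (hP1 : P1.PosSemidef) (hP2 : P2.PosSemidef)
    (hSARE1 : P1 = Q + Aᵀ * P1 * A + (∑ i, al i • ((A' i)ᵀ * P1 * A' i)) -
      Aᵀ * P1 * B * (R + Bᵀ * P1 * B + ∑ j, be j • ((B' j)ᵀ * P1 * B' j))⁻¹ *
        (Bᵀ * P1 * A))
    (hSARE2 : P2 = Q + Aᵀ * P2 * A + (∑ i, al i • ((A' i)ᵀ * P2 * A' i)) -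
      Aᵀ * P2 * B * (R + Bᵀ * P2 * B + ∑ j, be j • ((B' j)ᵀ * P2 * B' j))⁻¹ *
        (Bᵀ * P2 * A))
    (hadm1 : Admissible A A' B B' al be
      (-(R + Bᵀ * P1 * B + ∑ j, be j • ((B' j)ᵀ * P1 * B' j))⁻¹ * (Bᵀ * P1 * A)))
    (hadm2 : Admissible A A' B B' al be
      (-(R + Bᵀ * P2 * B + ∑ j, be j • ((B' j)ᵀ * P2 * B' j))⁻¹ * (Bᵀ * P2 * A))) :
    P1 = P2 := by
  have h12 := aux_main A A' B B' al be hal hbe Q R hR P1 P2 hP1 hP2 hSARE1 hSARE2 hadm2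
  have h21 := aux_main A A' B B' al be hal hbe Q R hR P2 P1 hP2 hP1 hSARE2 hSARE1 hadm1
  have hH : (P1 - P2).PosSemidef := by
    refine Matrix.PosSemidef.of_dotProduct_mulVec_nonneg (hP1.isHermitian.sub hP2.isHermitian)
      fun x => ?_
    have h := h21 x
    rw [← neg_sub P1 P2, Matrix.neg_mulVec, dotProduct_neg] at h
    simpa using h
  have hv : ∀ x, (P1 - P2) *ᵥ x = 0 := fun x =>
    (hH.dotProduct_mulVec_zero_iff x).1
      (le_antisymm (by simpa using h12 x) (hH.dotProduct_mulVec_nonneg x))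
  have h0 : P1 - P2 = 0 := by
    apply Matrix.ext_of_mulVec_single
    intro i
    rw [hv, Matrix.zero_mulVec]
  exact sub_eq_zero.1 h0
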